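/- Let A₀, A₁, A_{m+1}, …, Aₙ be positive semidefinite complex Hermitian n × n matrices with 2 ≤ m ≤ n, and define g(λ) = D(((1−λ)A₀ + λA₁)[m], A_{m+1}, …, Aₙ)^{1/m} for λ ∈ [0,1]. Then g is concave on [0,1]; in particular g(λ) ≥ (1−λ)g(0) + λg(1) for all λ ∈ [0,1]. -/

import Mathlib

open scoped ComplexOrder

/-- The mixed discriminant of `n` complex `n × n` matrices. -/
noncomputable def mixedDisc {n : ℕ} (A : Fin n → Matrix (Fin n) (Fin n) ℂ) : ℂ :=
  (n.factorial : ℂ)⁻¹ * ∑ σ : Equiv.Perm (Fin n), (Matrix.of fun i j => A (σ j) i j).det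

/-!
A function of a matrix is called stable if it has no zeros at matrices with positive definite
imaginary part. The determinant is stable. Replacing one of the repeated arguments `M` of a mixed
discriminant by a fixed positive definite `B` is, up to a factor, differentiating in direction `B`,
which preserves stability by the Gauss–Lucas theorem. So for positive definite entries
`p(M) = D(M[m], A_{m+1}, …, Aₙ)` is stable. As `p` is homogeneous of degree `m`, rotating `M + s A`
into the upper half-plane shows that for positive definite `M` and `A` all roots of
`s ↦ p(M + s A)` are negative, i.e. `p(M + s A) = p(A) ∏ᵢ (s + xᵢ)` with `m` numbers `xᵢ > 0`.
Superadditivity of the geometric mean then gives `p(M)^{1/m} + p(A)^{1/m} ≤ p(M + A)^{1/m}`,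
which by homogeneity is concavity of `p^{1/m}` on the positive definite cone. The semidefinite
case is a limit.
-/

open Polynomial

section GeometricMean

variable {ι : Type*} [Fintype ι] [Nonempty ι]

theorem rpow_prod_le_mean_div_mul_rpow_prod {w z : ι → ℝ} (hw : ∀ i, 0 ≤ w i)
    (hz : ∀ i, 0 < z i) :
    (∏ i, w i) ^ ((1 : ℝ) / Fintype.card ι) ≤
      (∑ i, w i / z i) / Fintype.card ι * (∏ i, z i) ^ ((1 : ℝ) / Fintype.card ι) := by
  have amgm := Real.geom_mean_le_arith_mean Finset.univ (fun _ => 1) (fun i => w i / z i)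
    (by simp) (by simp [Fintype.card_pos]) fun i _ => div_nonneg (hw i) (hz i).le
  simp only [Real.rpow_one, one_mul, Finset.sum_const, Finset.card_univ, nsmul_eq_mul, mul_one,
    Finset.prod_div_distrib, ← one_div] at amgm
  rwa [Real.div_rpow (Finset.prod_nonneg fun i _ => hw i) (Finset.prod_nonneg fun i _ => (hz i).le),
    div_le_iff₀ (Real.rpow_pos_of_pos (Finset.prod_pos fun i _ => hz i) _)] at amgm

theorem rpow_prod_add_rpow_prod_le {u v : ι → ℝ} (hu : ∀ i, 0 ≤ u i) (hv : ∀ i, 0 ≤ v i) :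
    (∏ i, u i) ^ ((1 : ℝ) / Fintype.card ι) + (∏ i, v i) ^ ((1 : ℝ) / Fintype.card ι) ≤
      (∏ i, (u i + v i)) ^ ((1 : ℝ) / Fintype.card ι) := by
  by_cases! hz : ∃ i, u i + v i = 0
  · obtain ⟨i, hi⟩ := hz
    obtain ⟨hui, hvi⟩ := (add_eq_zero_iff_of_nonneg (hu i) (hv i)).1 hi
    have hne : (1 : ℝ) / Fintype.card ι ≠ 0 := by simp
    rw [Finset.prod_eq_zero (Finset.mem_univ i) hui, Finset.prod_eq_zero (Finset.mem_univ i) hvi,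
      Real.zero_rpow hne, add_zero]
    exact Real.rpow_nonneg (Finset.prod_nonneg fun j _ => add_nonneg (hu j) (hv j)) _
  · have hpos : ∀ i, 0 < u i + v i := fun i => (add_nonneg (hu i) (hv i)).lt_of_ne' (hz i)
    have hmean : (∑ i, u i / (u i + v i)) / Fintype.card ι +
        (∑ i, v i / (u i + v i)) / Fintype.card ι = (1 : ℝ) := by
      rw [← add_div, ← Finset.sum_add_distrib]
      simp [← add_div, div_self (hz _)]
    calc _ ≤ _ := add_le_add (rpow_prod_le_mean_div_mul_rpow_prod hu hpos)
          (rpow_prod_le_mean_div_mul_rpow_prod hv hpos)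
      _ = _ := by rw [← add_mul, hmean, one_mul]

end GeometricMean

section NegativeRoots

variable {P : ℂ[X]}

theorem mem_convex_of_eval_derivative_eq_zero (hP : 0 < P.natDegree) {K : Set ℂ} (hK : Convex ℝ K)
    (hroots : ∀ z, P.eval z = 0 → z ∈ K) {z : ℂ} (hz : P.derivative.eval z = 0) : z ∈ K := by
  have hP' : P.derivative ≠ 0 := by
    rw [Ne, ← leadingCoeff_eq_zero, leadingCoeff_derivative]
    simpa [hP.ne'] using ne_zero_of_natDegree_gt hP
  refine convexHull_min (fun w hw => hroots w ?_) hK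
    (rootSet_derivative_subset_convexHull_rootSet (natDegree_pos_iff_degree_pos.1 hP)
      ((mem_rootSet_of_ne hP').2 (by simpa using hz)))
  simpa using aeval_eq_zero_of_mem_rootSet hw

theorem exists_eval_eq_leadingCoeff_mul_prod_of_roots_neg (hroots : ∀ z, P.eval z = 0 → z < 0) :
    ∃ x : P.roots → ℝ, (∀ i, 0 < x i) ∧
      ∀ t : ℝ, P.eval (t : ℂ) = P.leadingCoeff * (∏ i, (t + x i) : ℝ) := by
  have hneg : ∀ i : P.roots, (i : ℂ).re < 0 ∧ (i : ℂ).im = 0 := fun i =>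
    Complex.neg_iff.1 (hroots _ (isRoot_of_mem_roots Multiset.coe_mem))
  refine ⟨fun i => -(i : ℂ).re, fun i => neg_pos.2 (hneg i).1, fun t => ?_⟩
  rw [(IsAlgClosed.splits P).eval_eq_prod_roots, ← Multiset.map_univ, Complex.ofReal_prod]
  congr 1
  refine Finset.prod_congr rfl fun i _ => ?_
  apply Complex.ext <;> simp [(hneg i).2, sub_eq_add_neg]

theorem eval_zero_pos_of_roots_neg (hlc : 0 < P.leadingCoeff) (hroots : ∀ z, P.eval z = 0 → z < 0) :
    0 < P.eval 0 := by
  obtain ⟨x, hx, hP⟩ := exists_eval_eq_leadingCoeff_mul_prod_of_roots_neg hroots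
  rw [← Complex.ofReal_zero, hP]
  refine mul_pos hlc (Complex.zero_lt_real.2 (Finset.prod_pos fun i _ => ?_))
  simpa using hx i

theorem eval_derivative_zero_pos_of_roots_neg (hP : 0 < P.natDegree) (hlc : 0 < P.leadingCoeff)
    (hroots : ∀ z, P.eval z = 0 → z < 0) : 0 < P.derivative.eval 0 := by
  have hlc' : 0 < P.derivative.leadingCoeff := by
    rw [leadingCoeff_derivative]
    exact mul_pos hlc (Nat.cast_pos.2 hP)
  exact eval_zero_pos_of_roots_neg hlc' fun _ =>
    mem_convex_of_eval_derivative_eq_zero hP (convex_Iio 0) hroots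

theorem rpow_eval_zero_add_rpow_leadingCoeff_le (hP : 0 < P.natDegree)
    (hlc : 0 < P.leadingCoeff) (hroots : ∀ z, P.eval z = 0 → z < 0) :
    (P.eval 0).re ^ ((1 : ℝ) / P.natDegree) + P.leadingCoeff.re ^ ((1 : ℝ) / P.natDegree) ≤
      (P.eval 1).re ^ ((1 : ℝ) / P.natDegree) := by
  obtain ⟨x, hx, heval⟩ := exists_eval_eq_leadingCoeff_mul_prod_of_roots_neg hroots
  have hcard : Fintype.card P.roots = P.natDegree := by
    rw [Multiset.card_coe, (IsAlgClosed.splits P).natDegree_eq_card_roots]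
  have : Nonempty P.roots := Fintype.card_pos_iff.1 (hcard ▸ hP)
  have heval_re : ∀ t : ℝ, (P.eval (t : ℂ)).re = P.leadingCoeff.re * ∏ i, (t + x i) := fun t => by
    rw [heval, Complex.re_mul_ofReal]
  have heval0 : (P.eval 0).re = P.leadingCoeff.re * ∏ i, x i := by simpa using heval_re 0
  have heval1 : (P.eval 1).re = P.leadingCoeff.re * ∏ i, (x i + 1) := by
    simpa [add_comm] using heval_re 1
  have hlc' : 0 ≤ P.leadingCoeff.re := (Complex.pos_iff.1 hlc).1.le
  have hmean := rpow_prod_add_rpow_prod_le (fun i => (hx i).le) fun _ => zero_le_one' ℝ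
  simp only [hcard, Finset.prod_const_one, Real.one_rpow] at hmean
  rw [heval0, heval1, Real.mul_rpow hlc' (Finset.prod_nonneg fun i _ => (hx i).le),
    Real.mul_rpow hlc' (Finset.prod_nonneg fun i _ => add_nonneg (hx i).le zero_le_one)]
  calc _ = P.leadingCoeff.re ^ ((1 : ℝ) / P.natDegree) *
          ((∏ i, x i) ^ ((1 : ℝ) / P.natDegree) + 1) := by rw [mul_add, mul_one]
    _ ≤ _ := by gcongr

end NegativeRoots

section MultilinearPencil

variable {R ι : Type*} {V : ι → Type*} [CommSemiring R] [∀ i, AddCommMonoid (V i)]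
  [∀ i, Module R (V i)] [DecidableEq ι]
  (F : MultilinearMap R V R) (S : Finset ι) (x y : ∀ i, V i)

/-- The polynomial `s ↦ F z` of a multilinear form `F`, where `z i = s • y i + x i` for `i ∈ S` and
`z i = x i` for `i ∉ S`. -/
noncomputable def multilinearPencil : R[X] :=
  ∑ T ∈ S.powerset, C (F (T.piecewise y x)) * X ^ T.card

theorem eval_multilinearPencil (s : R) :
    (multilinearPencil F S x y).eval s = F (S.piecewise (s • y + x) x) := by
  rw [F.map_piecewise_add, multilinearPencil, eval_finsetSum]
  refine Finset.sum_congr rfl fun T _ => ?_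
  have hsmul : T.piecewise (s • y) x =
      T.piecewise (fun i => s • T.piecewise y x i) (T.piecewise y x) := by
    ext i
    by_cases hi : i ∈ T <;> simp [hi]
  rw [hsmul, F.map_piecewise_smul, Finset.prod_const, smul_eq_mul, mul_comm]
  simp only [eval_mul, eval_C, eval_pow, eval_X]

theorem coeff_multilinearPencil (d : ℕ) :
    (multilinearPencil F S x y).coeff d = ∑ T ∈ S.powersetCard d, F (T.piecewise y x) := by
  simp only [multilinearPencil, finsetSum_coeff, coeff_C_mul_X_pow, ← Finset.sum_filter, eq_comm,
    Finset.powersetCard_eq_filter]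

theorem natDegree_multilinearPencil_le : (multilinearPencil F S x y).natDegree ≤ S.card :=
  natDegree_sum_le_of_forall_le _ _ fun _ hT =>
    (natDegree_C_mul_X_pow_le _ _).trans (Finset.card_le_card (Finset.mem_powerset.1 hT))

theorem coeff_card_multilinearPencil :
    (multilinearPencil F S x y).coeff S.card = F (S.piecewise y x) := by
  simp [coeff_multilinearPencil]

theorem eval_derivative_zero_multilinearPencil :
    (multilinearPencil F S x y).derivative.eval 0 =
      ∑ i ∈ S, F (Function.update x i (y i)) := by
  rw [← coeff_zero_eq_eval_zero, coeff_derivative, coeff_multilinearPencil]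
  simp [Finset.powersetCard_one, Finset.piecewise_singleton]

end MultilinearPencil

section MixedDiscriminant

variable {n : ℕ}

/-- The mixed discriminant as a multilinear form. -/
noncomputable def mixedDiscMultilinear (n : ℕ) :
    MultilinearMap ℂ (fun _ : Fin n => Matrix (Fin n) (Fin n) ℂ) ℂ :=
  (n.factorial : ℂ)⁻¹ • ∑ σ : Equiv.Perm (Fin n),
    MultilinearMap.domDomCongr σ
      ((Matrix.detRowAlternating (R := ℂ) (n := Fin n)).toMultilinearMap.compLinearMap fun j =>
        LinearMap.pi fun i => Matrix.entryLinearMap ℂ ℂ i j)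

theorem mixedDiscMultilinear_apply (A : Fin n → Matrix (Fin n) (Fin n) ℂ) :
    mixedDiscMultilinear n A = mixedDisc A := by
  simp only [mixedDiscMultilinear, mixedDisc, smul_apply, sum_apply, smul_eq_mul]
  congr 1
  refine Finset.sum_congr rfl fun σ _ => ?_
  rw [← Matrix.det_transpose]
  rfl

theorem mixedDisc_comp_perm (A : Fin n → Matrix (Fin n) (Fin n) ℂ) (τ : Equiv.Perm (Fin n)) :
    mixedDisc (A ∘ τ) = mixedDisc A := by
  unfold mixedDisc
  congr 1
  exact Fintype.sum_equiv (Equiv.mulLeft τ) _ _ fun σ => rfl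

theorem mixedDisc_const (M : Matrix (Fin n) (Fin n) ℂ) : mixedDisc (fun _ => M) = M.det := by
  have h : (Matrix.of fun i j => M i j) = M := rfl
  simp [mixedDisc, h, Fintype.card_perm, Nat.factorial_ne_zero]

theorem continuous_mixedDisc :
    Continuous (mixedDisc : (Fin n → Matrix (Fin n) (Fin n) ℂ) → ℂ) := by
  unfold mixedDisc
  refine continuous_const.mul (continuous_finsetSum _ fun σ _ => Continuous.matrix_det ?_)
  exact continuous_matrix fun i j =>
    (continuous_apply (A := fun _ => Matrix (Fin n) (Fin n) ℂ) (σ j)).matrix_elem i j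

/-- The mixed discriminant with `M` in the slots of `S` and `B i` in the remaining slots `i`;
the paper's `D(M[m], A_{m+1}, …, Aₙ)` is the case where `S` holds the first `m` slots. -/
noncomputable def mixedDiscOn (S : Finset (Fin n)) (B : Fin n → Matrix (Fin n) (Fin n) ℂ)
    (M : Matrix (Fin n) (Fin n) ℂ) : ℂ :=
  mixedDisc (S.piecewise (fun _ => M) B)

variable (S : Finset (Fin n)) (B : Fin n → Matrix (Fin n) (Fin n) ℂ)
  (M A : Matrix (Fin n) (Fin n) ℂ)

theorem mixedDiscOn_filter (p : Fin n → Prop) [DecidablePred p] :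
    mixedDiscOn (Finset.univ.filter p) B M = mixedDisc fun k => if p k then M else B k := by
  rw [mixedDiscOn]
  congr 1
  ext1 k
  simp only [Finset.piecewise, Finset.mem_filter_univ]

theorem mixedDiscOn_univ : mixedDiscOn Finset.univ B M = M.det := by
  rw [mixedDiscOn, Finset.piecewise_univ, mixedDisc_const]

theorem mixedDiscOn_smul (c : ℂ) : mixedDiscOn S B (c • M) = c ^ S.card * mixedDiscOn S B M := by
  have h := (mixedDiscMultilinear n).map_piecewise_smul (fun _ => c) (S.piecewise (fun _ => M) B) S
  rw [mixedDiscMultilinear_apply, mixedDiscMultilinear_apply, Finset.prod_const, smul_eq_mul] at h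
  rw [mixedDiscOn, mixedDiscOn, ← h]
  congr 1
  ext1 i
  by_cases hi : i ∈ S <;> simp [hi]

theorem mixedDisc_update_piecewise_insert {i j : Fin n} (hi : i ∉ S) (hj : j ∈ insert i S) :
    mixedDisc (Function.update ((insert i S).piecewise (fun _ => M) B) j (B i)) =
      mixedDiscOn S B M := by
  rw [mixedDiscOn, ← mixedDisc_comp_perm _ (Equiv.swap i j)]
  congr 1
  ext1 k
  rcases eq_or_ne k i with rfl | hki
  · simp [hi]
  rcases eq_or_ne k j with rfl | hkj
  · simp [hki.symm, Finset.mem_of_mem_insert_of_ne hj hki]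
  · simp [Equiv.swap_apply_of_ne_of_ne hki hkj, hkj, Finset.piecewise, hki]

/-- The restriction of `mixedDiscOn S B` to the line through `M` in direction `A`, as a polynomial
in the parameter `s` of `M + s • A`; its roots carry all the positivity information. -/
noncomputable def mixedDiscPencil : ℂ[X] :=
  multilinearPencil (mixedDiscMultilinear n) S (S.piecewise (fun _ => M) B) fun _ => A

theorem eval_mixedDiscPencil (s : ℂ) :
    (mixedDiscPencil S B M A).eval s = mixedDiscOn S B (M + s • A) := by
  rw [mixedDiscPencil, eval_multilinearPencil, mixedDiscMultilinear_apply, mixedDiscOn]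
  congr 1
  ext1 i
  by_cases hi : i ∈ S <;> simp [hi, add_comm]

theorem coeff_card_mixedDiscPencil :
    (mixedDiscPencil S B M A).coeff S.card = mixedDiscOn S B A := by
  rw [mixedDiscPencil, coeff_card_multilinearPencil, mixedDiscMultilinear_apply,
    Finset.piecewise_idem_right, mixedDiscOn]

variable {S B A}

theorem natDegree_mixedDiscPencil (hA : mixedDiscOn S B A ≠ 0) :
    (mixedDiscPencil S B M A).natDegree = S.card :=
  natDegree_eq_of_le_of_coeff_ne_zero (natDegree_multilinearPencil_le _ _ _ _)
    (by rwa [coeff_card_mixedDiscPencil])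

theorem leadingCoeff_mixedDiscPencil (hA : mixedDiscOn S B A ≠ 0) :
    (mixedDiscPencil S B M A).leadingCoeff = mixedDiscOn S B A := by
  rw [leadingCoeff, natDegree_mixedDiscPencil M hA, coeff_card_mixedDiscPencil]

variable (B) in
theorem eval_derivative_zero_mixedDiscPencil_insert {i : Fin n} (hi : i ∉ S) :
    (mixedDiscPencil (insert i S) B M (B i)).derivative.eval 0 =
      (insert i S).card * mixedDiscOn S B M := by
  rw [mixedDiscPencil, eval_derivative_zero_multilinearPencil, ← nsmul_eq_mul, ← Finset.sum_const]
  refine Finset.sum_congr rfl fun j hj => ?_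
  rw [mixedDiscMultilinear_apply, mixedDisc_update_piecewise_insert S B M hi hj]

end MixedDiscriminant

theorem finset_univ_induction {ι : Type*} [Fintype ι] [DecidableEq ι] {p : Finset ι → Prop}
    (univ : p Finset.univ) (of_insert : ∀ i S, i ∉ S → p (insert i S) → p S) (S : Finset ι) :
    p S := by
  induction S using WellFoundedGT.induction with
  | ind S ih =>
    by_cases! hS : ∃ i, i ∉ S
    · obtain ⟨i, hi⟩ := hS
      exact of_insert i S hi (ih _ (Finset.ssubset_insert hi))
    · rwa [Finset.eq_univ_of_forall hS]

section Stability

variable {ι : Type*} [Fintype ι]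

/-- Matrices with positive definite imaginary part, the matrix analogue of the open upper
half-plane. The quadratic form is used instead of the Hermitian matrix `(M - Mᴴ) / 2i`. -/
def ImPosDef (M : Matrix ι ι ℂ) : Prop :=
  ∀ v : ι → ℂ, v ≠ 0 → 0 < (star v ⬝ᵥ M.mulVec v).im

/-- Stability of a function of a matrix, in the sense of stable polynomials: no zeros in the matrix
upper half-plane `ImPosDef`. -/
def MatrixStable (f : Matrix ι ι ℂ → ℂ) : Prop :=
  ∀ M, ImPosDef M → f M ≠ 0

variable {M A : Matrix ι ι ℂ}

theorem ImPosDef.det_ne_zero [DecidableEq ι] (hM : ImPosDef M) : M.det ≠ 0 := by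
  intro h
  obtain ⟨v, hv, hMv⟩ := Matrix.exists_mulVec_eq_zero_iff.2 h
  simpa [hMv] using hM v hv

theorem im_dotProduct_smul_mulVec (hA : A.IsHermitian) (s : ℂ) (v : ι → ℂ) :
    (star v ⬝ᵥ (s • A).mulVec v).im = s.im * (star v ⬝ᵥ A.mulVec v).re := by
  have h : (star v ⬝ᵥ A.mulVec v).im = 0 := hA.im_star_dotProduct_mulVec_self v
  rw [Matrix.smul_mulVec, dotProduct_smul, smul_eq_mul, Complex.mul_im, h, mul_zero, zero_add]

theorem ImPosDef.add_smul (hM : ImPosDef M) (hA : A.PosSemidef) {s : ℂ} (hs : 0 ≤ s.im) :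
    ImPosDef (M + s • A) := by
  intro v hv
  rw [Matrix.add_mulVec, dotProduct_add, Complex.add_im, im_dotProduct_smul_mulVec hA.isHermitian]
  have h := (Complex.nonneg_iff.1 (hA.dotProduct_mulVec_nonneg v)).1
  exact add_pos_of_pos_of_nonneg (hM v hv) (mul_nonneg hs h)

theorem imPosDef_smul (hA : A.PosDef) {s : ℂ} (hs : 0 < s.im) : ImPosDef (s • A) := by
  intro v hv
  rw [im_dotProduct_smul_mulVec hA.isHermitian]
  exact mul_pos hs (Complex.pos_iff.1 (hA.dotProduct_mulVec_pos hv)).1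

variable {n : ℕ} {S : Finset (Fin n)} {B : Fin n → Matrix (Fin n) (Fin n) ℂ}
  {M A : Matrix (Fin n) (Fin n) ℂ}

theorem MatrixStable.mixedDiscOn_ne_zero (h : MatrixStable (mixedDiscOn S B)) (hA : A.PosDef) :
    mixedDiscOn S B A ≠ 0 := by
  have hI := h _ (imPosDef_smul hA (s := Complex.I) (by simp))
  rw [mixedDiscOn_smul] at hI
  exact right_ne_zero_of_mul hI

theorem MatrixStable.mixedDiscOn_of_insert {i : Fin n} (hi : i ∉ S) (hB : (B i).PosDef)
    (h : MatrixStable (mixedDiscOn (insert i S) B)) : MatrixStable (mixedDiscOn S B) := by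
  intro M hM h0
  set P := mixedDiscPencil (insert i S) B M (B i)
  have hdeg : 0 < P.natDegree := by
    simp [P, natDegree_mixedDiscPencil M (h.mixedDiscOn_ne_zero hB), hi]
  have hroots : ∀ z, P.eval z = 0 → z ∈ {z : ℂ | z.im < 0} := by
    intro z hz
    rw [eval_mixedDiscPencil] at hz
    by_contra hz'
    exact h _ (hM.add_smul hB.posSemidef (not_lt.1 hz')) hz
  have hder : P.derivative.eval 0 = 0 := by
    rw [eval_derivative_zero_mixedDiscPencil_insert B M hi, h0, mul_zero]
  simpa using mem_convex_of_eval_derivative_eq_zero hdeg (convex_halfSpace_im_lt 0) hroots hder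

theorem matrixStable_mixedDiscOn (hB : ∀ i ∉ S, (B i).PosDef) : MatrixStable (mixedDiscOn S B) := by
  induction S using finset_univ_induction with
  | univ => exact fun M hM => by simpa only [mixedDiscOn_univ] using hM.det_ne_zero
  | of_insert i S hi ih =>
    have hB' : ∀ j ∉ insert i S, (B j).PosDef := fun j hj =>
      hB j fun hjS => hj (Finset.mem_insert_of_mem hjS)
    exact (ih hB').mixedDiscOn_of_insert hi (hB i hi)

theorem exists_im_pos_im_mul_nonneg {s : ℂ} (hs : ¬ s < 0) :
    ∃ c : ℂ, 0 < c.im ∧ 0 ≤ (c * s).im := by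
  rcases lt_trichotomy s.im 0 with him | him | him
  · exact ⟨starRingEnd ℂ s, by simpa using him, by simp [mul_comm]⟩
  · refine ⟨Complex.I, by simp, ?_⟩
    simpa [Complex.neg_iff, him] using hs
  · exact ⟨-starRingEnd ℂ s, by simpa using him, by simp [mul_comm]⟩

theorem MatrixStable.neg_of_mixedDiscOn_add_smul_eq_zero (h : MatrixStable (mixedDiscOn S B))
    (hM : M.PosDef) (hA : A.PosDef) {s : ℂ} (hs : mixedDiscOn S B (M + s • A) = 0) : s < 0 := by
  by_contra hneg
  obtain ⟨c, hc, hcs⟩ := exists_im_pos_im_mul_nonneg hneg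
  have hrot : ImPosDef (c • (M + s • A)) := by
    rw [smul_add, smul_smul]
    exact (imPosDef_smul hM hc).add_smul hA.posSemidef hcs
  exact h _ hrot (by rw [mixedDiscOn_smul, hs, mul_zero])

theorem MatrixStable.neg_of_eval_mixedDiscPencil_eq_zero (h : MatrixStable (mixedDiscOn S B))
    (hM : M.PosDef) (hA : A.PosDef) (z : ℂ) (hz : (mixedDiscPencil S B M A).eval z = 0) : z < 0 :=
  h.neg_of_mixedDiscOn_add_smul_eq_zero hM hA (by rwa [eval_mixedDiscPencil] at hz)

end Stability

section Concavity

variable {n : ℕ} {S : Finset (Fin n)} {B : Fin n → Matrix (Fin n) (Fin n) ℂ}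
  {M A : Matrix (Fin n) (Fin n) ℂ}

theorem mixedDiscOn_pos (hB : ∀ i ∉ S, (B i).PosDef) (hM : M.PosDef) :
    0 < mixedDiscOn S B M := by
  induction S using finset_univ_induction generalizing M with
  | univ => simpa only [mixedDiscOn_univ] using hM.det_pos
  | of_insert i S hi ih =>
    have hB' : ∀ j ∉ insert i S, (B j).PosDef := fun j hj =>
      hB j fun hjS => hj (Finset.mem_insert_of_mem hjS)
    have hlead := ih hB' (hB i hi)
    have hder := eval_derivative_zero_pos_of_roots_neg (P := mixedDiscPencil (insert i S) B M (B i))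
      (by simp [natDegree_mixedDiscPencil M hlead.ne', hi])
      (by rwa [leadingCoeff_mixedDiscPencil M hlead.ne'])
      ((matrixStable_mixedDiscOn hB').neg_of_eval_mixedDiscPencil_eq_zero hM (hB i hi))
    rw [eval_derivative_zero_mixedDiscPencil_insert B M hi] at hder
    exact pos_of_mul_pos_right hder (Nat.cast_nonneg _)

theorem rpow_mixedDiscOn_add_rpow_mixedDiscOn_le (hS : S.Nonempty) (hB : ∀ i ∉ S, (B i).PosDef)
    (hM : M.PosDef) (hA : A.PosDef) :
    (mixedDiscOn S B M).re ^ ((1 : ℝ) / S.card) + (mixedDiscOn S B A).re ^ ((1 : ℝ) / S.card) ≤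
      (mixedDiscOn S B (M + A)).re ^ ((1 : ℝ) / S.card) := by
  have hlead := mixedDiscOn_pos hB hA
  have hdeg := natDegree_mixedDiscPencil M hlead.ne'
  have hlc := leadingCoeff_mixedDiscPencil M hlead.ne'
  have h := rpow_eval_zero_add_rpow_leadingCoeff_le (hdeg ▸ hS.card_pos) (hlc ▸ hlead)
    ((matrixStable_mixedDiscOn hB).neg_of_eval_mixedDiscPencil_eq_zero hM hA)
  simpa only [hdeg, hlc, eval_mixedDiscPencil, zero_smul, add_zero, one_smul] using h

theorem rpow_mixedDiscOn_smul (hS : S.Nonempty) (hM : 0 ≤ mixedDiscOn S B M) {a : ℝ} (ha : 0 ≤ a) :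
    (mixedDiscOn S B (a • M)).re ^ ((1 : ℝ) / S.card) =
      a * (mixedDiscOn S B M).re ^ ((1 : ℝ) / S.card) := by
  rw [← Complex.coe_smul, mixedDiscOn_smul, ← Complex.ofReal_pow, Complex.re_ofReal_mul,
    Real.mul_rpow (by positivity) (Complex.nonneg_iff.1 hM).1, one_div,
    Real.pow_rpow_inv_natCast ha hS.card_ne_zero]

theorem concaveOn_rpow_mixedDiscOn_of_posDef (hS : S.Nonempty) (hB : ∀ i ∉ S, (B i).PosDef) :
    ConcaveOn ℝ {M | M.PosDef} fun M => (mixedDiscOn S B M).re ^ ((1 : ℝ) / S.card) := by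
  refine concaveOn_iff_forall_pos.2 ⟨?_, fun M hM A hA a b ha hb _ => ?_⟩
  · exact convex_iff_forall_pos.2 fun M hM A hA a b ha hb _ => (hM.smul ha).add (hA.smul hb)
  · simpa only [rpow_mixedDiscOn_smul hS (mixedDiscOn_pos hB hM).le ha.le,
      rpow_mixedDiscOn_smul hS (mixedDiscOn_pos hB hA).le hb.le, smul_eq_mul] using
      rpow_mixedDiscOn_add_rpow_mixedDiscOn_le hS hB (hM.smul ha) (hA.smul hb)

open Filter Topology in
theorem tendsto_rpow_mixedDiscOn_add_smul_one (S : Finset (Fin n))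
    (B : Fin n → Matrix (Fin n) (Fin n) ℂ) (M : Matrix (Fin n) (Fin n) ℂ) :
    Tendsto (fun ε : ℝ => (mixedDiscOn S (fun i => B i + ε • 1) (M + ε • 1)).re ^
        ((1 : ℝ) / S.card)) (𝓝[>] 0) (𝓝 ((mixedDiscOn S B M).re ^ ((1 : ℝ) / S.card))) := by
  have hslots : Continuous fun ε : ℝ =>
      S.piecewise (fun _ => M + ε • 1) fun i => B i + ε • (1 : Matrix (Fin n) (Fin n) ℂ) :=
    continuous_pi fun i => by
      by_cases hi : i ∈ S <;> simp only [Finset.piecewise, hi, if_true, if_false] <;> fun_prop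
  have hcont := (Complex.continuous_re.comp (continuous_mixedDisc.comp hslots)).rpow_const
    fun _ => Or.inr (by positivity : 0 ≤ (1 : ℝ) / S.card)
  simpa [mixedDiscOn] using (hcont.tendsto 0).mono_left nhdsWithin_le_nhds

theorem concaveOn_rpow_mixedDiscOn (hS : S.Nonempty) (hB : ∀ i ∉ S, (B i).PosSemidef) :
    ConcaveOn ℝ {M | M.PosSemidef} fun M => (mixedDiscOn S B M).re ^ ((1 : ℝ) / S.card) := by
  refine ⟨fun M hM A hA a b ha hb _ => (hM.smul ha).add (hA.smul hb),
    fun M hM A hA a b ha hb hab => ?_⟩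
  refine le_of_tendsto_of_tendsto
    (((tendsto_rpow_mixedDiscOn_add_smul_one S B M).const_smul a).add
      ((tendsto_rpow_mixedDiscOn_add_smul_one S B A).const_smul b))
    (tendsto_rpow_mixedDiscOn_add_smul_one S B (a • M + b • A)) ?_
  filter_upwards [self_mem_nhdsWithin] with ε hε
  have hε1 : (ε • (1 : Matrix (Fin n) (Fin n) ℂ)).PosDef := Matrix.PosDef.one.smul hε
  have hadd : a • (M + ε • 1) + b • (A + ε • 1) = a • M + b • A + ε • 1 := by
    rw [smul_add, smul_add, add_add_add_comm, ← add_smul, hab, one_smul]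
  simpa only [hadd] using (concaveOn_rpow_mixedDiscOn_of_posDef hS fun i hi =>
    Matrix.PosDef.posSemidef_add (hB i hi) hε1).2 (Matrix.PosDef.posSemidef_add hM hε1)
      (Matrix.PosDef.posSemidef_add hA hε1) ha hb hab

end Concavity

/-- Brunn–Minkowski type theorem for mixed discriminants. For positive
semidefinite Hermitian `A₀, A₁, A_{m+1},…,Aₙ` and `2 ≤ m ≤ n`, the function
`g(λ) = D(((1−λ)A₀ + λA₁)[m], A_{m+1},…,Aₙ)^{1/m}` is concave on `[0,1]`; in particular
`g(λ) ≥ (1−λ)g(0) + λg(1)` there. (Slots `m+1,…,n` of `rest` hold `A_{m+1},…,Aₙ`.) -/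
theorem mixedDisc_brunn_minkowski (n m : ℕ) (hm : 2 ≤ m) (hmn : m ≤ n)
    (A₀ A₁ : Matrix (Fin n) (Fin n) ℂ)
    (rest : Fin n → Matrix (Fin n) (Fin n) ℂ)
    (hA₀ : A₀.PosSemidef) (hA₁ : A₁.PosSemidef)
    (hrest : ∀ k : Fin n, m ≤ (k : ℕ) → (rest k).PosSemidef) :
    ConcaveOn ℝ (Set.Icc (0 : ℝ) 1) (fun l : ℝ =>
        (mixedDisc fun k : Fin n =>
          if (k : ℕ) < m then (1 - l) • A₀ + l • A₁ else rest k).re ^ ((1 : ℝ) / m)) ∧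
      ∀ l ∈ Set.Icc (0 : ℝ) 1,
        (1 - l) * (mixedDisc fun k : Fin n =>
            if (k : ℕ) < m then A₀ else rest k).re ^ ((1 : ℝ) / m) +
          l * (mixedDisc fun k : Fin n =>
            if (k : ℕ) < m then A₁ else rest k).re ^ ((1 : ℝ) / m) ≤
        (mixedDisc fun k : Fin n =>
          if (k : ℕ) < m then (1 - l) • A₀ + l • A₁ else rest k).re ^ ((1 : ℝ) / m) := by
  have hcard : (Finset.univ.filter fun k : Fin n => (k : ℕ) < m).card = m := by
    simp [Fin.card_filter_val_lt, hmn]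
  have hcone := concaveOn_rpow_mixedDiscOn (S := Finset.univ.filter fun k : Fin n => (k : ℕ) < m)
    (B := rest) (Finset.card_pos.1 (by omega)) fun k hk => hrest k (by simpa using hk)
  have hconc := (hcone.comp_affineMap (AffineMap.lineMap A₀ A₁)).subset
    (fun l hl => hcone.1.lineMap_mem hA₀ hA₁ hl) (convex_Icc (0 : ℝ) 1)
  simp only [Function.comp_def, AffineMap.lineMap_apply_module, hcard, mixedDiscOn_filter] at hconc
  refine ⟨hconc, fun l hl => ?_⟩
  simpa using hconc.2 (x := 0) (by simp) (y := 1) (by simp) (sub_nonneg.2 hl.2) hl.1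
    (sub_add_cancel 1 l)
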